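/- Let s = (s_1,…,s_m) be a scoring vector, let λ ∈ [0,1], and consider the mixture model FI^λ in which, with probability λ, the n agents' rankings are independent and uniform over all m! rankings, and with probability 1-λ all n agents share a single uniformly random ranking. Let k = (k_1,…,k_n) be a vector of nonnegative integers summing to m, and c_i = k_1 + … + k_{i-1}. Then the expected utility of agent i under the non-interleaving picking sequence k equals λ · g(k_i, c_i) + (1-λ) · ( s_{c_i+1} + … + s_{c_i+k_i} ), where g(k,t) denotes the average, over all t-element subsets S of {1,…,m}, of the sum of s_r over the k smallest elements r of {1,…,m} \ S. In particular, this expected utility depends only on k_i and c_i. -/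

import Mathlib

/-!
Agent `i`'s utility depends only on which ranks, in her own ranking, are still available when she
picks: she gets the `k i` smallest of them. The items taken before her number
`c = ∑ j ∈ range i, k j` and depend only on the rankings of the agents before her. Under full
independence, fix the other rankings; since `Equiv.Perm (Fin m)` acts transitively on the
`c`-element sets of items, her own uniform ranking sends the taken items to a uniformly random
`c`-element set of ranks, which is the average defining `g`. Under full correlation the taken ranks
are always `1, …, c`.
-/

/-- The `k` most preferred items of `S` under the ranking `σ` (where `σ r` is the item of
0-based rank `r`, so `σ.symm x` is the rank of item `x`): the items of `S` having fewer
than `k` strictly better items inside `S`. -/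
def topk {m : ℕ} (σ : Fin m ≃ Fin m) (S : Finset (Fin m)) (k : ℕ) : Finset (Fin m) :=
  S.filter fun x => (S.filter fun y => σ.symm y < σ.symm x).card < k

/-- Items remaining before the `i`-th agent (0-based) picks, under profile `P` (agent `i`
has ranking `P i`) and pick-count vector `k` (agent `i` picks `k i` items). -/
def remaining {m : ℕ} (P : ℕ → Fin m ≃ Fin m) (k : ℕ → ℕ) : ℕ → Finset (Fin m)
  | 0 => Finset.univ
  | i + 1 => remaining P k i \ topk (P i) (remaining P k i) (k i)

/-- The set of items greedily picked by the `i`-th agent (0-based). -/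
def alloc {m : ℕ} (P : ℕ → Fin m ≃ Fin m) (k : ℕ → ℕ) (i : ℕ) : Finset (Fin m) :=
  topk (P i) (remaining P k i) (k i)

/-- The utility of the `i`-th agent (0-based): the sum of the scores `s r` over the
1-based ranks `r` (in her own ranking) of the items she receives. -/
noncomputable def util {m : ℕ} (s : ℕ → ℝ) (P : ℕ → Fin m ≃ Fin m) (k : ℕ → ℕ)
    (i : ℕ) : ℝ :=
  ∑ x ∈ alloc P k i, s (((P i).symm x : ℕ) + 1)

/-- The `k` smallest elements of a finite set `A` of naturals: the elements of `A` having
fewer than `k` strictly smaller elements inside `A`. -/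
def smallestK (A : Finset ℕ) (k : ℕ) : Finset ℕ :=
  A.filter fun x => (A.filter fun y => y < x).card < k

/-- `g m s j k t` is the average, over all `t`-element subsets `S` of `{j,…,m}`, of the sum
of `s r` over the `k` smallest elements `r` of `{j,…,m} \ S`. -/
noncomputable def g (m : ℕ) (s : ℕ → ℝ) (j k t : ℕ) : ℝ :=
  (∑ S ∈ (Finset.Icc j m).powersetCard t,
      ∑ r ∈ smallestK (Finset.Icc j m \ S) k, s r) /
    (((Finset.Icc j m).powersetCard t).card : ℝ)

/-- Extend a profile on `Fin n` to a profile indexed by `ℕ` (agents `≥ n` are irrelevant). -/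
def extendProfile {m : ℕ} (n : ℕ) (Q : Fin n → Fin m ≃ Fin m) : ℕ → Fin m ≃ Fin m :=
  fun i => if h : i < n then Q ⟨i, h⟩ else Equiv.refl _

/-- Expected utility of the `i`-th agent (0-based) in the full independence model. -/
noncomputable def EUFI (n m : ℕ) (s : ℕ → ℝ) (k : ℕ → ℕ) (i : ℕ) : ℝ :=
  (∑ Q : Fin n → Fin m ≃ Fin m, util s (extendProfile n Q) k i) /
    (Fintype.card (Fin n → Fin m ≃ Fin m) : ℝ)

/-- Expected utility of the `i`-th agent (0-based) in the full correlation model: all agents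
share a single uniformly random ranking. -/
noncomputable def EUFC (m : ℕ) (s : ℕ → ℝ) (k : ℕ → ℕ) (i : ℕ) : ℝ :=
  (∑ σ : Fin m ≃ Fin m, util s (fun _ => σ) k i) / (Fintype.card (Fin m ≃ Fin m) : ℝ)

open Finset
open scoped BigOperators

section Averages

variable {M : Type*} [AddCommMonoid M] [Module ℚ≥0 M]

theorem expect_expect_update {ι : Type*} {α : ι → Type*} [DecidableEq ι] [Fintype ι]
    [∀ i, Fintype (α i)] (i : ι) (F : (∀ j, α j) → M) :
    𝔼 Q, 𝔼 a, F (Function.update Q i a) = 𝔼 Q, F Q := by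
  let swap : Equiv.Perm ((∀ j, α j) × α i) :=
    Function.Involutive.toPerm (fun p ↦ (Function.update p.1 i p.2, p.1 i)) fun p ↦ by simp
  calc 𝔼 Q, 𝔼 a, F (Function.update Q i a)
      = 𝔼 p, F (swap p).1 := (expect_product univ univ fun p ↦ F (swap p).1).symm
    _ = 𝔼 p : (∀ j, α j) × α i, F p.1 := Fintype.expect_equiv swap _ _ fun _ ↦ rfl
    _ = 𝔼 Q, 𝔼 _a : α i, F Q := expect_product univ univ fun p : (∀ j, α j) × α i ↦ F p.1
    _ = 𝔼 Q, F Q := expect_congr rfl fun Q _ ↦ expect_const ⟨Q i, mem_univ _⟩ _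

theorem expect_smul_of_isPretransitive {G X : Type*} [Group G] [MulAction G X]
    [MulAction.IsPretransitive G X] [Fintype G] [Fintype X] (F : X → M) (x : X) :
    𝔼 g : G, F (g • x) = 𝔼 y, F y := by
  have orbit_average : ∀ y : X, 𝔼 g : G, F (g • y) = 𝔼 g : G, F (g • x) := fun y ↦ by
    obtain ⟨h, rfl⟩ := MulAction.exists_smul_eq G x y
    exact Fintype.expect_equiv (Equiv.mulRight h) _ _ fun g ↦ by simp [mul_smul]
  have : Nonempty X := ⟨x⟩
  calc 𝔼 g : G, F (g • x)
      = 𝔼 y, 𝔼 g : G, F (g • y) := by simp_rw [orbit_average, Fintype.expect_const]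
    _ = 𝔼 g : G, 𝔼 y, F (g • y) := expect_comm ..
    _ = 𝔼 _g : G, 𝔼 y, F y := expect_congr rfl fun g _ ↦
        Fintype.expect_equiv (MulAction.toPerm g) _ _ fun _ ↦ rfl
    _ = 𝔼 y, F y := Fintype.expect_const _

theorem expect_perm_map {α : Type*} [Fintype α] [DecidableEq α] (F : Finset α → M)
    (U : Finset α) :
    𝔼 σ : Equiv.Perm α, F (U.map σ.toEmbedding) = 𝔼 T ∈ powersetCard #U univ, F T := by
  have := Set.powersetCard.isPretransitive (α := α) (n := #U)
  calc 𝔼 σ : Equiv.Perm α, F (U.map σ.toEmbedding)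
      = 𝔼 σ : Equiv.Perm α, F (σ • Set.powersetCard.ofCard rfl : Set.powersetCard α #U) := by
        simp only [Set.powersetCard.coe_smul, Set.powersetCard.val_ofCard, map_eq_image]
        rfl
    _ = 𝔼 T : Set.powersetCard α #U, F T :=
        expect_smul_of_isPretransitive (fun T : Set.powersetCard α #U ↦ F T) _
    _ = 𝔼 T ∈ powersetCard #U univ, F T :=
        expect_nbij Subtype.val (fun T _ ↦ mem_powersetCard_univ.2 T.2) (fun _ _ ↦ rfl)
          Subtype.val_injective.injOn fun T hT ↦ ⟨⟨T, mem_powersetCard_univ.1 hT⟩, by simp⟩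

end Averages

theorem card_filter_card_filter_lt {α : Type*} [LinearOrder α] (A : Finset α) (k : ℕ) :
    #{x ∈ A | #{y ∈ A | y < x} < k} = min k #A := by
  obtain ⟨n, e, rfl⟩ : ∃ n, ∃ e : Fin n ↪o α, univ.map e.toEmbedding = A :=
    ⟨#A, A.orderEmbOfFin rfl, A.map_orderEmbOfFin_univ rfl⟩
  have card_lt (x : Fin n) : #{y | y < x} = x := by rw [filter_gt_eq_Iio, Fin.card_Iio]
  simp [filter_map, card_lt, Fin.card_filter_val_lt, min_comm]

theorem smallestK_Icc (a b k : ℕ) : smallestK (Icc a b) k = {x ∈ Icc a b | x < a + k} := by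
  refine filter_congr fun x hx ↦ ?_
  have below_eq : {y ∈ Icc a b | y < x} = Ico a x := by
    ext y
    simp only [mem_filter, mem_Icc, mem_Ico] at hx ⊢
    omega
  rw [below_eq, Nat.card_Ico, Nat.sub_lt_iff_lt_add' (mem_Icc.1 hx).1]

section PickingSequence

variable {m : ℕ}

/-- The rank of an item under the ranking `σ`, as an embedding, so that sets of items can be
transported to sets of ranks. Ranks are 1-based here, to match `util` and `g m s 1`. -/
def rankEmb (σ : Fin m ≃ Fin m) : Fin m ↪ ℕ :=
  σ.symm.toEmbedding.trans (Fin.valEmbedding.trans (addRightEmbedding 1))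

theorem rankEmb_apply (σ : Fin m ≃ Fin m) (x : Fin m) : rankEmb σ x = (σ.symm x : ℕ) + 1 := rfl

theorem map_map_rankEmb_refl (σ : Fin m ≃ Fin m) (A : Finset (Fin m)) :
    (A.map σ.symm.toEmbedding).map (rankEmb (Equiv.refl _)) = A.map (rankEmb σ) :=
  map_map ..

theorem map_rankEmb_univ (σ : Fin m ≃ Fin m) : univ.map (rankEmb σ) = Icc 1 m := by
  rw [rankEmb, ← map_map, map_univ_equiv, ← map_map, Fin.map_valEmbedding_univ,
    Nat.Iio_eq_range, range_eq_Ico, map_add_right_Ico, zero_add, Ico_add_one_right_eq_Icc]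

theorem Icc_sdiff_map_rankEmb_compl (σ : Fin m ≃ Fin m) (A : Finset (Fin m)) :
    Icc 1 m \ Aᶜ.map (rankEmb σ) = A.map (rankEmb σ) := by
  rw [← map_rankEmb_univ σ, ← Finset.map_sdiff, ← compl_eq_univ_sdiff, compl_compl]

theorem map_rankEmb_topk (σ : Fin m ≃ Fin m) (A : Finset (Fin m)) (k : ℕ) :
    (topk σ A k).map (rankEmb σ) = smallestK (A.map (rankEmb σ)) k := by
  simp [topk, smallestK, filter_map, Function.comp_def, rankEmb_apply]

theorem expect_map_rankEmb {M : Type*} [AddCommMonoid M] [Module ℚ≥0 M] (F : Finset ℕ → M)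
    (U : Finset (Fin m)) :
    𝔼 σ : Fin m ≃ Fin m, F (U.map (rankEmb σ)) = 𝔼 T ∈ powersetCard #U (Icc 1 m), F T := by
  let ranks : Finset (Fin m) ↪ Finset ℕ := mapEmbedding (rankEmb (Equiv.refl _)) |>.toEmbedding
  calc 𝔼 σ : Fin m ≃ Fin m, F (U.map (rankEmb σ))
      = 𝔼 σ : Equiv.Perm (Fin m), F (ranks (U.map σ.toEmbedding)) :=
        Fintype.expect_equiv (Equiv.inv _) _ _ fun σ ↦ congrArg F (map_map_rankEmb_refl σ U).symm
    _ = 𝔼 T ∈ powersetCard #U univ, F (ranks T) := expect_perm_map (F ∘ ranks) U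
    _ = 𝔼 T ∈ powersetCard #U (Icc 1 m), F T := by
        rw [← map_rankEmb_univ (Equiv.refl _), powersetCard_map, map_eq_image,
          expect_image ranks.injective.injOn]

theorem topk_subset (σ : Fin m ≃ Fin m) (A : Finset (Fin m)) (k : ℕ) : topk σ A k ⊆ A :=
  filter_subset _ _

theorem card_topk (σ : Fin m ≃ Fin m) (A : Finset (Fin m)) (k : ℕ) :
    #(topk σ A k) = min k #A := by
  rw [← card_map (rankEmb σ), map_rankEmb_topk, smallestK, card_filter_card_filter_lt, card_map]

theorem card_remaining (P : ℕ → Fin m ≃ Fin m) (k : ℕ → ℕ) (i : ℕ) :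
    #(remaining P k i) = m - ∑ j ∈ range i, k j := by
  induction i with
  | zero => simp [remaining]
  | succ i ih =>
    rw [remaining, card_sdiff_of_subset (topk_subset ..), card_topk, ih, sum_range_succ]
    omega

theorem card_compl_remaining (P : ℕ → Fin m ≃ Fin m) {k : ℕ → ℕ} {i : ℕ}
    (hc : ∑ j ∈ range i, k j ≤ m) : #(remaining P k i)ᶜ = ∑ j ∈ range i, k j := by
  rw [card_compl, card_remaining, Fintype.card_fin, Nat.sub_sub_self hc]

theorem remaining_congr {P P' : ℕ → Fin m ≃ Fin m} (k : ℕ → ℕ) {i : ℕ}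
    (h : ∀ j < i, P j = P' j) : remaining P k i = remaining P' k i := by
  induction i with
  | zero => rfl
  | succ i ih =>
    rw [remaining, remaining, ih fun j hj ↦ h j (hj.trans i.lt_succ_self), h i i.lt_succ_self]

theorem remaining_update_self (P : ℕ → Fin m ≃ Fin m) (k : ℕ → ℕ) (i : ℕ) (σ : Fin m ≃ Fin m) :
    remaining (Function.update P i σ) k i = remaining P k i :=
  remaining_congr k fun _ hj ↦ Function.update_of_ne hj.ne _ _

theorem util_eq_sum_smallestK (s : ℕ → ℝ) (P : ℕ → Fin m ≃ Fin m) (k : ℕ → ℕ) (i : ℕ) :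
    util s P k i = ∑ r ∈ smallestK ((remaining P k i).map (rankEmb (P i))) (k i), s r := by
  rw [← map_rankEmb_topk, sum_map]
  rfl

theorem extendProfile_update {n : ℕ} (Q : Fin n → Fin m ≃ Fin m) (i : Fin n)
    (σ : Fin m ≃ Fin m) :
    extendProfile n (Function.update Q i σ) = Function.update (extendProfile n Q) i σ := by
  ext1 j
  by_cases hj : j < n
  · simp [extendProfile, hj, Function.update_apply, Fin.ext_iff]
  · have hne : j ≠ i := fun h ↦ hj (h ▸ i.isLt)
    simp [extendProfile, hj, hne]

theorem expect_sum_smallestK_map_rankEmb (s : ℕ → ℝ) (k : ℕ) (A : Finset (Fin m)) :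
    𝔼 σ : Fin m ≃ Fin m, ∑ r ∈ smallestK (A.map (rankEmb σ)) k, s r = g m s 1 k #Aᶜ := by
  simp_rw [← Icc_sdiff_map_rankEmb_compl _ A]
  rw [expect_map_rankEmb fun T ↦ ∑ r ∈ smallestK (Icc 1 m \ T) k, s r, expect_eq_sum_div_card, g]

theorem expect_util_update (s : ℕ → ℝ) (P : ℕ → Fin m ≃ Fin m) {k : ℕ → ℕ} {i : ℕ}
    (hc : ∑ j ∈ range i, k j ≤ m) :
    𝔼 σ : Fin m ≃ Fin m, util s (Function.update P i σ) k i =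
      g m s 1 (k i) (∑ j ∈ range i, k j) := by
  simp_rw [util_eq_sum_smallestK, remaining_update_self, Function.update_self]
  rw [expect_sum_smallestK_map_rankEmb, card_compl_remaining P hc]

theorem EUFI_eq_g {n : ℕ} (s : ℕ → ℝ) {k : ℕ → ℕ} {i : ℕ} (hi : i < n)
    (hc : ∑ j ∈ range i, k j ≤ m) : EUFI n m s k i = g m s 1 (k i) (∑ j ∈ range i, k j) :=
  calc EUFI n m s k i
      = 𝔼 Q : Fin n → Fin m ≃ Fin m, util s (extendProfile n Q) k i :=
        (Fintype.expect_eq_sum_div_card _).symm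
    _ = 𝔼 Q : Fin n → Fin m ≃ Fin m, 𝔼 σ : Fin m ≃ Fin m,
          util s (Function.update (extendProfile n Q) i σ) k i := by
        rw [← expect_expect_update ⟨i, hi⟩]
        simp_rw [extendProfile_update]
    _ = g m s 1 (k i) (∑ j ∈ range i, k j) := by
        simp_rw [expect_util_update s _ hc, Fintype.expect_const]

theorem map_rankEmb_remaining_const (σ : Fin m ≃ Fin m) (k : ℕ → ℕ) (i : ℕ) :
    (remaining (fun _ ↦ σ) k i).map (rankEmb σ) = Icc (∑ j ∈ range i, k j + 1) m := by
  induction i with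
  | zero => exact map_rankEmb_univ σ
  | succ i ih =>
    rw [remaining, Finset.map_sdiff, map_rankEmb_topk, ih, smallestK_Icc, sum_range_succ]
    ext r
    simp only [mem_sdiff, mem_filter, mem_Icc]
    omega

theorem util_const (s : ℕ → ℝ) (σ : Fin m ≃ Fin m) {k : ℕ → ℕ} {i : ℕ}
    (hc : ∑ j ∈ range i, k j + k i ≤ m) :
    util s (fun _ ↦ σ) k i =
      ∑ r ∈ Icc (∑ j ∈ range i, k j + 1) (∑ j ∈ range i, k j + k i), s r := by
  rw [util_eq_sum_smallestK, map_rankEmb_remaining_const, smallestK_Icc]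
  congr 1
  ext r
  simp only [mem_filter, mem_Icc]
  omega

theorem EUFC_eq_sum (s : ℕ → ℝ) {k : ℕ → ℕ} {i : ℕ} (hc : ∑ j ∈ range i, k j + k i ≤ m) :
    EUFC m s k i = ∑ r ∈ Icc (∑ j ∈ range i, k j + 1) (∑ j ∈ range i, k j + k i), s r := by
  rw [EUFC, ← Fintype.expect_eq_sum_div_card]
  simp_rw [util_const s _ hc, Fintype.expect_const]

end PickingSequence

theorem mixture_expected_utility_general {n m : ℕ} (s : ℕ → ℝ) (lam : ℝ) {k : ℕ → ℕ} {i : ℕ}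
    (hi : i < n) (hc : ∑ j ∈ range i, k j + k i ≤ m) :
    lam * EUFI n m s k i + (1 - lam) * EUFC m s k i =
      lam * g m s 1 (k i) (∑ j ∈ range i, k j) +
        (1 - lam) * ∑ j ∈ Icc (∑ j ∈ range i, k j + 1) (∑ j ∈ range i, k j + k i), s j := by
  rw [EUFI_eq_g s hi (le_self_add.trans hc), EUFC_eq_sum s hc]

/-- In the mixture model `FI^λ` (with probability `λ` the profile is drawn from the full
independence model, with probability `1-λ` from the full correlation model), the expected
utility of agent `i` under the non-interleaving picking sequence `k` equals
`λ · g(k_i, c_i) + (1-λ) · (s_{c_i+1} + ⋯ + s_{c_i+k_i})`, where `c_i = k_1 + ⋯ + k_{i-1}`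
and `g m s 1 k t` is the average over all `t`-element subsets `S` of `{1,…,m}` of the sum of
`s r` over the `k` smallest elements of `{1,…,m} \ S`.  In particular it depends only on
`k_i` and `c_i`. -/
theorem mixture_expected_utility
    (n m : ℕ) (hn : 0 < n) (hm : 0 < m) (s : ℕ → ℝ)
    (hmono : ∀ i j : ℕ, 1 ≤ i → i ≤ j → j ≤ m → s j ≤ s i)
    (hnonneg : ∀ j : ℕ, 1 ≤ j → j ≤ m → 0 ≤ s j)
    (lam : ℝ) (hlam0 : 0 ≤ lam) (hlam1 : lam ≤ 1)
    (k : ℕ → ℕ) (hk : ∑ i ∈ Finset.range n, k i = m) :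
    ∀ i < n,
      lam * EUFI n m s k i + (1 - lam) * EUFC m s k i =
        lam * g m s 1 (k i) (∑ j ∈ Finset.range i, k j) +
          (1 - lam) * ∑ j ∈ Finset.Icc ((∑ j ∈ Finset.range i, k j) + 1)
            ((∑ j ∈ Finset.range i, k j) + k i), s j := by
  intro i hi
  refine mixture_expected_utility_general s lam hi ?_
  rw [← sum_range_succ, ← hk]
  exact sum_le_sum_of_subset (range_mono hi)
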